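/- Let n ≥ 1, T₀ > 0, and A = {(0,0,0), (0,0,T₀)} ⊆ ℍ^n. Then the union over all m ≥ 1 of the iterated geodesic hulls G^m(A) is the whole space: ∪_{m=1}^∞ G^m(A) = ℍ^n. -/

import Mathlib

open MeasureTheory Set Real
open scoped ENNReal NNReal

noncomputable section

/-- Points of the Heisenberg group `ℍⁿ`, written `(x, y, t)` with `x, y ∈ ℝⁿ`, `t ∈ ℝ`. -/
abbrev Hpt (n : ℕ) : Type := (Fin n → ℝ) × (Fin n → ℝ) × ℝ

/-- The projection of a point of `ℍⁿ` onto the horizontal `z = (x,y)` plane, viewed as a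
point of the Euclidean space `ℝ^{2n}` (so that lengths are Euclidean lengths). -/
def hproj {n : ℕ} (p : Hpt n) : EuclideanSpace ℝ (Fin n ⊕ Fin n) :=
  (WithLp.equiv 2 ((Fin n ⊕ Fin n) → ℝ)).symm (Sum.elim p.1 p.2.1)

/-- A curve `γ` is a horizontal curve on `[a,b]` if it is (absolutely continuous, here:
Lipschitz) and almost everywhere it has a derivative `γ' = (x', y', t')` satisfying the
horizontality condition `t' = 2 ∑ⱼ (xⱼ' yⱼ - yⱼ' xⱼ)`. -/
def IsHorizontal {n : ℕ} (γ : ℝ → Hpt n) (a b : ℝ) : Prop :=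
  a ≤ b ∧ (∃ K : NNReal, LipschitzOnWith K γ (Icc a b)) ∧
    ∃ γ' : ℝ → Hpt n,
      (∀ᵐ s ∂(volume.restrict (Icc a b)), HasDerivAt γ (γ' s) s) ∧
      (∀ᵐ s ∂(volume.restrict (Icc a b)),
        (γ' s).2.2 = 2 * ∑ j, ((γ' s).1 j * (γ s).2.1 j - (γ' s).2.1 j * (γ s).1 j))

/-- The length of a horizontal curve on `[a,b]`: the Euclidean length (total variation)
of its projection to the `z`-plane `ℝ^{2n}`. -/
def hLength {n : ℕ} (γ : ℝ → Hpt n) (a b : ℝ) : ℝ≥0∞ :=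
  eVariationOn (fun s => hproj (γ s)) (Icc a b)

/-- The Carnot–Carathéodory distance: the infimum of lengths of horizontal curves
joining `p` to `q`. -/
def ccDist {n : ℕ} (p q : Hpt n) : ℝ≥0∞ :=
  ⨅ (γ : ℝ → Hpt n) (a : ℝ) (b : ℝ) (_ : IsHorizontal γ a b)
    (_ : γ a = p) (_ : γ b = q), hLength γ a b

/-- `γ` is a geodesic on `[a,b]`: a horizontal curve whose length equals the
Carnot–Carathéodory distance between its endpoints. -/
def IsGeodesicOn {n : ℕ} (γ : ℝ → Hpt n) (a b : ℝ) : Prop :=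
  IsHorizontal γ a b ∧ hLength γ a b = ccDist (γ a) (γ b)

/-- A set `A ⊆ ℍⁿ` is geodetically convex if every geodesic connecting any two points of
`A` lies in `A`. -/
def GeodConvexSet {n : ℕ} (A : Set (Hpt n)) : Prop :=
  ∀ p ∈ A, ∀ q ∈ A, ∀ (γ : ℝ → Hpt n) (a b : ℝ),
    IsGeodesicOn γ a b → γ a = p → γ b = q → ∀ s ∈ Icc a b, γ s ∈ A

/-- A function `u : ℍⁿ → ℝ` is geodetically convex if its composition with every geodesic
is convex. -/
def GeodConvexFun {n : ℕ} (u : Hpt n → ℝ) : Prop :=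
  ∀ (γ : ℝ → Hpt n) (a b : ℝ), IsGeodesicOn γ a b → ConvexOn ℝ (Icc a b) (u ∘ γ)

/-- The union of the images of all geodesics connecting pairs of points of `S`. -/
def geodJoin {n : ℕ} (S : Set (Hpt n)) : Set (Hpt n) :=
  {z | ∃ p ∈ S, ∃ q ∈ S, ∃ (γ : ℝ → Hpt n) (a b : ℝ),
    IsGeodesicOn γ a b ∧ γ a = p ∧ γ b = q ∧ z ∈ γ '' Icc a b}

/-- The iterated geodesic hulls `G^m(A)`, with `G^0(A) = A`. -/
def Gm {n : ℕ} (A : Set (Hpt n)) : ℕ → Set (Hpt n)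
  | 0 => A
  | (m + 1) => geodJoin (Gm A m)

lemma deriv_norm_le_aux {E : Type*} [NormedAddCommGroup E] [NormedSpace ℝ E]
    {z : ℝ → E} {l : ℝ → ℝ} {z' : E} {l' a b s : ℝ} (hs : s ∈ Ioo a b)
    (hz : HasDerivAt z z' s) (hl : HasDerivAt l l' s)
    (h : ∀ u ∈ Icc a b, ∀ v ∈ Icc a b, u ≤ v → ‖z v - z u‖ ≤ l v - l u) : ‖z'‖ ≤ l' := by
  have h1 : Filter.Tendsto (fun u => ‖slope z s u‖) (nhdsWithin s (Ioi s)) (nhds ‖z'‖) :=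
    (hz.tendsto_slope.mono_left (nhdsWithin_mono _ (fun x hx => ne_of_gt hx))).norm
  have h2 : Filter.Tendsto (slope l s) (nhdsWithin s (Ioi s)) (nhds l') :=
    hl.tendsto_slope.mono_left (nhdsWithin_mono _ (fun x hx => ne_of_gt hx))
  refine le_of_tendsto_of_tendsto h1 h2 ?_
  have : Ioo s b ∈ nhdsWithin s (Ioi s) := Ioo_mem_nhdsGT hs.2
  filter_upwards [this] with u hu
  have hpos : 0 < u - s := sub_pos.2 hu.1
  rw [slope_def_module, slope_def_module, norm_smul, smul_eq_mul, norm_inv, Real.norm_of_nonneg hpos.le]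
  apply mul_le_mul_of_nonneg_left _ (inv_nonneg.2 hpos.le)
  exact h s ⟨hs.1.le, hs.2.le⟩ u ⟨(hs.1.trans hu.1).le, hu.2.le⟩ hu.1.le

lemma pointwise_aux {E : Type*} [NormedAddCommGroup E] [InnerProductSpace ℝ E]
    (J : E → E) (hJ1 : ∀ z, inner ℝ (J z) z = 0) (hJ2 : ∀ z, ‖J z‖ = ‖z‖)
    (z z' : E) (l' w C S : ℝ) (hw : 0 < w) (hS : 0 < S) (hCS : C ^ 2 + S ^ 2 = 1) (hl : ‖z'‖ ≤ l') :
    0 ≤ l' - w * (2 * inner ℝ (J z) z') -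
      w * ((-(w * l') / S ^ 2) * ‖z‖ ^ 2 + C / S * (2 * inner ℝ z z')) := by
  have hn : ‖(C / S) • z + J z‖ = ‖z‖ / S := by
    have : ‖(C / S) • z + J z‖ ^ 2 = (‖z‖ / S) ^ 2 := by
      rw [norm_add_sq_real, real_inner_smul_left, real_inner_comm, hJ1, hJ2, norm_smul, mul_pow,
        Real.norm_eq_abs, sq_abs]
      field_simp
      linear_combination ‖z‖ ^ 2 * hCS
    exact (sq_eq_sq₀ (norm_nonneg _) (by positivity)).1 this
  have hA : inner ℝ ((C / S) • z + J z) z' ≤ ‖z‖ / S * l' := by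
    refine (real_inner_le_norm _ _).trans ?_
    rw [hn]
    gcongr
  rw [inner_add_left, real_inner_smul_left] at hA
  have hl0 : 0 ≤ l' := (norm_nonneg _).trans hl
  have h2 : 0 ≤ l' * (1 - w * (‖z‖ / S)) ^ 2 := by positivity
  have h3 : (-(w * l') / S ^ 2) * ‖z‖ ^ 2 = - (w * l') * (‖z‖ / S) ^ 2 := by
    field_simp
  rw [h3]
  nlinarith [mul_le_mul_of_nonneg_left hA hw.le]

lemma iso_eps {E : Type*} [NormedAddCommGroup E] [InnerProductSpace ℝ E]
    (J : E → E) (hJ1 : ∀ z, inner ℝ (J z) z = 0) (hJ2 : ∀ z, ‖J z‖ = ‖z‖)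
    {z z' : ℝ → E} {τ l : ℝ → ℝ} {a b L : ℝ} (hab : a ≤ b) {K1 K2 K3 : NNReal}
    (hz : LipschitzOnWith K1 z (Icc a b)) (hτ : LipschitzOnWith K2 τ (Icc a b))
    (hl : LipschitzOnWith K3 l (Icc a b))
    (hz' : ∀ᵐ s ∂(volume.restrict (Icc a b)), HasDerivAt z (z' s) s)
    (hτ' : ∀ᵐ s ∂(volume.restrict (Icc a b)), HasDerivAt τ (2 * inner ℝ (J (z s)) (z' s)) s)
    (hzl : ∀ u ∈ Icc a b, ∀ v ∈ Icc a b, u ≤ v → ‖z v - z u‖ ≤ l v - l u)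
    (hza : z a = 0) (hzb : z b = 0) (hla : l a = 0) (hlb : l b = L) (ε : ℝ) (hε : 0 < ε) :
    π * (τ b - τ a) ≤ L * (L + 2 * ε) := by
  have hmem : ∀ s ∈ Icc a b, l s ∈ Icc 0 L := by
    intro s hs
    have h1 := (norm_nonneg _).trans (hzl a (left_mem_Icc.2 hab) s hs hs.1)
    have h2 := (norm_nonneg _).trans (hzl s hs b (right_mem_Icc.2 hab) hs.2)
    constructor <;> linarith
  have hL : 0 ≤ L := (hmem a (left_mem_Icc.2 hab)).1.trans (hmem a (left_mem_Icc.2 hab)).2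
  set w : ℝ := π / (L + 2 * ε) with hw
  have hwpos : 0 < w := by positivity
  have hsin : ∀ u ∈ Icc 0 L, 0 < sin (w * (u + ε)) := by
    intro u hu
    apply sin_pos_of_pos_of_lt_pi
    · have := hu.1; positivity
    · rw [hw, div_mul_eq_mul_div, div_lt_iff₀ (by positivity)]
      have := hu.2
      have := pi_pos
      nlinarith
  set g : ℝ → ℝ := fun u => cos (w * (u + ε)) / sin (w * (u + ε)) with hg
  obtain ⟨Kg, hKg⟩ : ∃ K, LipschitzOnWith K g (Icc 0 L) := by
    apply ContDiffOn.exists_lipschitzOnWith (n := 1) _ one_ne_zero (convex_Icc 0 L) isCompact_Icc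
    apply ContDiffOn.div
    · fun_prop
    · fun_prop
    · intro u hu; exact (hsin u hu).ne'
  have hgd : ∀ u ∈ Icc 0 L, HasDerivAt g (-w / sin (w * (u + ε)) ^ 2) u := by
    intro u hu
    have h0 : HasDerivAt (fun u => w * (u + ε)) w u := by
      simpa using ((hasDerivAt_id u).add_const ε).const_mul w
    have := (h0.cos).div (h0.sin) (hsin u hu).ne'
    have this2 : HasDerivAt g _ u := this
    refine this2.congr_deriv ?_
    have h1 := sin_sq_add_cos_sq (w * (u + ε))
    congr 1
    linear_combination (-w) * h1
  have hu : uIcc a b = Icc a b := uIcc_of_le hab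
  have aczn : AbsolutelyContinuousOnInterval (fun s => ‖z s‖) a b := by
    apply LipschitzOnWith.absolutelyContinuousOnInterval (K := 1 * K1)
    rw [hu]
    exact (lipschitzWith_one_norm.lipschitzOnWith (s := univ)).comp hz (mapsTo_univ _ _)
  have acg : AbsolutelyContinuousOnInterval (fun s => g (l s)) a b := by
    apply LipschitzOnWith.absolutelyContinuousOnInterval (K := Kg * K3)
    rw [hu]
    exact hKg.comp hl hmem
  have acl : AbsolutelyContinuousOnInterval l a b := by
    apply LipschitzOnWith.absolutelyContinuousOnInterval (K := K3)
    rwa [hu]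
  have acτ : AbsolutelyContinuousOnInterval τ a b := by
    apply LipschitzOnWith.absolutelyContinuousOnInterval (K := K2)
    rwa [hu]
  have acF := ((acl.fun_sub (acτ.const_mul w)).fun_sub ((acg.fun_mul (aczn.fun_mul aczn)).const_mul w))
  have hint := acF.integral_deriv_eq_sub
  have hnn : 0 ≤ ∫ s in a..b, deriv (fun s => l s - w * τ s - w * (g (l s) * (‖z s‖ * ‖z s‖))) s := by
    apply intervalIntegral.integral_nonneg_of_ae_restrict hab
    have hld := hl.ae_differentiableWithinAt_real measurableSet_Icc
    rw [← restrict_Ioo_eq_restrict_Icc] at hz' hτ' hld ⊢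
    filter_upwards [hz', hτ', hld, ae_restrict_mem measurableSet_Ioo] with s h1 h2 h3 hs
    have hsI : s ∈ Icc a b := Ioo_subset_Icc_self hs
    have hld' : HasDerivAt l (deriv l s) s := (h3.differentiableAt (Icc_mem_nhds hs.1 hs.2)).hasDerivAt
    have hb := deriv_norm_le_aux hs h1 hld' hzl
    have hls := hmem s hsI
    have hD := (hld'.sub (h2.const_mul w)).sub
      ((((hgd (l s) hls).comp s hld').mul h1.norm_sq).const_mul w)
    have heq : (fun s => l s - w * τ s - w * (g (l s) * (‖z s‖ * ‖z s‖))) =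
        ((l - fun y => w * τ y) - fun y => w * ((g ∘ l) * fun x => ‖z x‖ ^ 2) y) := by
      funext x; simp [sq]
    rw [heq, Pi.zero_apply, hD.deriv]
    have := pointwise_aux J hJ1 hJ2 (z s) (z' s) (deriv l s) w (cos (w * (l s + ε)))
      (sin (w * (l s + ε))) hwpos (hsin _ hls) (cos_sq_add_sin_sq _) hb
    refine this.trans_eq ?_
    simp only [Function.comp, hg]
    ring
  have hkey := hnn.trans_eq hint
  simp only [hza, hzb, hla, hlb, norm_zero, mul_zero, sub_zero] at hkey
  have h5 : w * (τ b - τ a) ≤ L := by linarith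
  rw [hw, div_mul_eq_mul_div, div_le_iff₀ (by positivity)] at h5
  exact h5

lemma iso_abs {E : Type*} [NormedAddCommGroup E] [InnerProductSpace ℝ E]
    (J : E → E) (hJ1 : ∀ z, inner ℝ (J z) z = 0) (hJ2 : ∀ z, ‖J z‖ = ‖z‖)
    {z z' : ℝ → E} {τ : ℝ → ℝ} {a b : ℝ} (hab : a ≤ b) {K1 K2 : NNReal}
    (hz : LipschitzOnWith K1 z (Icc a b)) (hτ : LipschitzOnWith K2 τ (Icc a b))
    (hz' : ∀ᵐ s ∂(volume.restrict (Icc a b)), HasDerivAt z (z' s) s)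
    (hτ' : ∀ᵐ s ∂(volume.restrict (Icc a b)), HasDerivAt τ (2 * inner ℝ (J (z s)) (z' s)) s)
    (hza : z a = 0) (hzb : z b = 0) :
    π * (τ b - τ a) ≤ (eVariationOn z (Icc a b)).toReal ^ 2 := by
  have hv : ∀ u v, u ∈ Icc a b → v ∈ Icc a b → u ≤ v →
      eVariationOn z (Icc u v) ≤ ENNReal.ofReal (K1 * (v - u)) := by
    intro u v hu hv huv
    have := (hz.mono (Icc_subset_Icc hu.1 hv.2)).comp_eVariationOn_le (g := id) (s := Icc u v)
      (fun x hx => hx)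
    rw [eVariationOn_id_Icc] at this
    rw [ENNReal.ofReal_mul (NNReal.coe_nonneg K1)]
    simpa using this
  have hfin : ∀ u v, u ∈ Icc a b → v ∈ Icc a b → u ≤ v → eVariationOn z (Icc u v) ≠ ⊤ :=
    fun u v h1 h2 h3 => ((hv u v h1 h2 h3).trans_lt ENNReal.ofReal_lt_top).ne
  have ha : a ∈ Icc a b := left_mem_Icc.2 hab
  set l : ℝ → ℝ := fun s => (eVariationOn z (Icc a s)).toReal with hl
  have hadd : ∀ u ∈ Icc a b, ∀ v ∈ Icc a b, u ≤ v →
      l v - l u = (eVariationOn z (Icc u v)).toReal := by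
    intro u hu v hv huv
    have := eVariationOn.Icc_add_Icc z (s := univ) hu.1 huv (mem_univ _)
    simp only [univ_inter] at this
    rw [hl]; simp only
    rw [← this, ENNReal.toReal_add (hfin _ _ ha hu hu.1) (hfin _ _ hu hv huv)]
    ring
  have hlip : LipschitzOnWith K1 l (Icc a b) := by
    apply LipschitzOnWith.of_le_add_mul
    intro x hx y hy
    rcases le_total x y with hxy | hxy
    · have := hadd x hx y hy hxy
      have h0 : 0 ≤ (eVariationOn z (Icc x y)).toReal := ENNReal.toReal_nonneg
      have : 0 ≤ (K1 : ℝ) * dist x y := by positivity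
      linarith
    · have h1 := hadd y hy x hx hxy
      have h2 := ENNReal.toReal_mono ENNReal.ofReal_ne_top (hv y x hy hx hxy)
      rw [ENNReal.toReal_ofReal (mul_nonneg (NNReal.coe_nonneg K1) (sub_nonneg.2 hxy))] at h2
      rw [Real.dist_eq, abs_of_nonneg (sub_nonneg.2 hxy)]
      linarith
  have hzl : ∀ u ∈ Icc a b, ∀ v ∈ Icc a b, u ≤ v → ‖z v - z u‖ ≤ l v - l u := by
    intro u hu v hv huv
    rw [hadd u hu v hv huv, ← dist_eq_norm, dist_edist]
    exact ENNReal.toReal_mono (hfin _ _ hu hv huv)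
      (eVariationOn.edist_le z (right_mem_Icc.2 huv) (left_mem_Icc.2 huv))
  have hla : l a = 0 := by
    simp [hl, eVariationOn.subsingleton]
  have key := fun ε hε => iso_eps J hJ1 hJ2 hab hz hτ hlip hz' hτ' hzl hza hzb hla rfl ε hε
  have hL : 0 ≤ l b := ENNReal.toReal_nonneg
  change _ ≤ (l b) ^ 2
  have ht : Filter.Tendsto (fun ε : ℝ => l b * (l b + 2 * ε)) (nhdsWithin 0 (Ioi 0))
      (nhds (l b ^ 2)) := by
    have : Continuous (fun ε : ℝ => l b * (l b + 2 * ε)) := by fun_prop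
    have := (this.tendsto 0).mono_left (nhdsWithin_le_nhds (s := Ioi 0))
    simpa [sq] using this
  refine ge_of_tendsto ht ?_
  filter_upwards [self_mem_nhdsWithin] with ε hε using key ε hε

def hprojL (n : ℕ) : Hpt n →L[ℝ] EuclideanSpace ℝ (Fin n ⊕ Fin n) :=
  LinearMap.toContinuousLinearMap
    { toFun := hproj
      map_add' := by
        intro p q; ext i; rcases i with i | i <;> simp [hproj]
      map_smul' := by
        intro c q; ext i; rcases i with i | i <;> simp [hproj] }

lemma hprojL_apply {n : ℕ} (p : Hpt n) : hprojL n p = hproj p := rfl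

def Jm {n : ℕ} (z : EuclideanSpace ℝ (Fin n ⊕ Fin n)) : EuclideanSpace ℝ (Fin n ⊕ Fin n) :=
  hproj (n := n) (fun j => z (Sum.inr j), fun j => - z (Sum.inl j), 0)

lemma Jm_inner {n : ℕ} (z w : EuclideanSpace ℝ (Fin n ⊕ Fin n)) :
    inner ℝ (Jm z) w = ∑ j, (w (Sum.inl j) * z (Sum.inr j) - w (Sum.inr j) * z (Sum.inl j)) := by
  rw [Finset.sum_sub_distrib]
  simp [Jm, hproj, PiLp.inner_apply, Fintype.sum_sum_type, sub_eq_add_neg]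

lemma Jm_norm {n : ℕ} (z : EuclideanSpace ℝ (Fin n ⊕ Fin n)) : ‖Jm z‖ = ‖z‖ := by
  simp [Jm, hproj, EuclideanSpace.norm_eq, Fintype.sum_sum_type, add_comm]

lemma Jm_orth {n : ℕ} (z : EuclideanSpace ℝ (Fin n ⊕ Fin n)) : inner ℝ (Jm z) z = 0 := by
  rw [Jm_inner]
  apply Finset.sum_eq_zero
  intro j _; ring

def tauL {n : ℕ} (x0 y0 : Fin n → ℝ) : Hpt n →L[ℝ] ℝ :=
  LinearMap.toContinuousLinearMap
    { toFun := fun p => p.2.2 - 2 * ∑ j, (p.1 j * y0 j - p.2.1 j * x0 j)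
      map_add' := by
        intro p q
        simp only [Prod.fst_add, Prod.snd_add, Pi.add_apply, Finset.sum_sub_distrib, add_mul,
          Finset.sum_add_distrib]
        ring
      map_smul' := by
        intro c q
        simp only [Prod.smul_fst, Prod.smul_snd, Pi.smul_apply, smul_eq_mul,
          RingHom.id_apply, mul_sub, Finset.mul_sum, mul_assoc]
        congr 1
        apply Finset.sum_congr rfl
        intro j _; ring }

lemma tauL_apply {n : ℕ} (x0 y0 : Fin n → ℝ) (p : Hpt n) :
    tauL x0 y0 p = p.2.2 - 2 * ∑ j, (p.1 j * y0 j - p.2.1 j * x0 j) := rfl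

lemma hlen_ge {n : ℕ} {γ : ℝ → Hpt n} {a b : ℝ} (h : IsHorizontal γ a b)
    {x0 y0 : Fin n → ℝ} {t0 t1 : ℝ} (ha : γ a = (x0, y0, t0)) (hb : γ b = (x0, y0, t1)) :
    π * (t1 - t0) ≤ (hLength γ a b).toReal ^ 2 := by
  obtain ⟨hab, ⟨K, hK⟩, γ', h1, h2⟩ := h
  set z : ℝ → EuclideanSpace ℝ (Fin n ⊕ Fin n) := fun s => hproj (γ s) - hproj (γ a) with hz
  have hvar : eVariationOn z (Icc a b) = hLength γ a b := by
    simp [eVariationOn, hLength, hz]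
  rw [← hvar]
  have hτab : tauL x0 y0 (γ b) - tauL x0 y0 (γ a) = t1 - t0 := by
    rw [ha, hb, tauL_apply, tauL_apply]; ring
  rw [← hτab]
  have hlz : LipschitzOnWith (‖hprojL n‖₊ * K) z (Icc a b) := by
    have := ((hprojL n).lipschitz.lipschitzOnWith (s := univ)).comp hK (mapsTo_univ _ _)
    intro u hu v hv
    have h3 := this hu hv
    simpa [hz, hprojL_apply] using h3
  have hlτ : LipschitzOnWith (‖tauL x0 y0‖₊ * K) (fun s => tauL x0 y0 (γ s)) (Icc a b) :=
    ((tauL x0 y0).lipschitz.lipschitzOnWith (s := univ)).comp hK (mapsTo_univ _ _)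
  refine iso_abs (z' := fun s => hproj (γ' s)) Jm Jm_orth Jm_norm hab hlz hlτ ?_ ?_ ?_ ?_
  · filter_upwards [h1] with s hs
    exact ((hprojL n).hasFDerivAt.comp_hasDerivAt s hs).sub_const _
  · filter_upwards [h1, h2] with s hs hs2
    refine ((tauL x0 y0).hasFDerivAt.comp_hasDerivAt s hs).congr_deriv ?_
    rw [tauL_apply, Jm_inner, hs2, hz, ha]
    simp only [hproj, ← mul_sub, ← Finset.sum_sub_distrib]
    congr 1
    apply Finset.sum_congr rfl
    intro j _
    simp
    ring
  · simp [hz]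
  · simp [hz, ha, hb, hproj]

lemma ccDist_le {n : ℕ} {γ : ℝ → Hpt n} {a b : ℝ} (h : IsHorizontal γ a b) :
    ccDist (γ a) (γ b) ≤ hLength γ a b := by
  unfold ccDist
  exact iInf_le_of_le γ (iInf_le_of_le a (iInf_le_of_le b (iInf_le_of_le h
    (iInf_le_of_le rfl (iInf_le_of_le rfl le_rfl)))))

lemma geod_of {n : ℕ} {γ : ℝ → Hpt n} {a b : ℝ} (h : IsHorizontal γ a b)
    (hmin : ∀ (η : ℝ → Hpt n) (c d : ℝ), IsHorizontal η c d → η c = γ a → η d = γ b →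
      hLength γ a b ≤ hLength η c d) : IsGeodesicOn γ a b := by
  refine ⟨h, le_antisymm ?_ (ccDist_le h)⟩
  unfold ccDist
  simp only [le_iInf_iff]
  exact fun η c d h1 h2 h3 => hmin η c d h1 h2 h3

lemma hLength_ne_top {n : ℕ} {γ : ℝ → Hpt n} {a b : ℝ} (h : IsHorizontal γ a b) :
    hLength γ a b ≠ ⊤ := by
  obtain ⟨hab, ⟨K, hK⟩, -⟩ := h
  have := ((hprojL n).lipschitz.lipschitzOnWith (s := univ)).comp hK (mapsTo_univ _ _)
  exact this.comp_boundedVariationOn (g := id) (fun x hx => hx) (BoundedVariationOn.id_Icc a b)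

lemma hLength_le {n : ℕ} {γ : ℝ → Hpt n} {a b : ℝ} (K : ℝ) (hK : 0 ≤ K)
    (h : ∀ u ∈ Icc a b, ∀ v ∈ Icc a b, ‖hproj (γ u) - hproj (γ v)‖ ≤ K * |u - v|) :
    hLength γ a b ≤ ENNReal.ofReal (K * (b - a)) := by
  have hl : LipschitzOnWith (NNReal.mk K hK) (fun s => hproj (γ s)) (Icc a b) := by
    apply LipschitzOnWith.of_dist_le_mul
    intro u hu v hv
    rw [dist_eq_norm, Real.dist_eq]
    exact h u hu v hv
  have := hl.comp_eVariationOn_le (g := id) (s := Icc a b) (fun x hx => hx)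
  rw [eVariationOn_id_Icc] at this
  rw [ENNReal.ofReal_mul hK]
  have hK' : ENNReal.ofReal K = ((NNReal.mk K hK : NNReal) : ENNReal) := by
    rw [ENNReal.ofReal, Real.toNNReal_of_nonneg hK]
  rw [hK']
  exact this

lemma horiz_of_smooth {n : ℕ} {γ γ' : ℝ → Hpt n} {a b : ℝ} (hab : a ≤ b)
    (h : ∀ s, HasDerivAt γ (γ' s) s) (hc : Continuous γ')
    (h2 : ∀ s, (γ' s).2.2 = 2 * ∑ j, ((γ' s).1 j * (γ s).2.1 j - (γ' s).2.1 j * (γ s).1 j)) :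
    IsHorizontal γ a b := by
  refine ⟨hab, ?_, γ', .of_forall h, .of_forall h2⟩
  apply ContDiffOn.exists_lipschitzOnWith (n := 1) _ one_ne_zero (convex_Icc a b) isCompact_Icc
  apply ContDiff.contDiffOn
  rw [contDiff_one_iff_deriv]
  refine ⟨fun s => (h s).differentiableAt, ?_⟩
  have : deriv γ = γ' := funext fun s => (h s).deriv
  rwa [this]

/-- horizontal segments -/
lemma seg_geod {n : ℕ} (x y : Fin n → ℝ) (t : ℝ) (a b : ℝ) (hab : a ≤ b) :
    IsGeodesicOn (fun s => ((s • x, s • y, t) : Hpt n)) a b := by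
  have hh : IsHorizontal (fun s => ((s • x, s • y, t) : Hpt n)) a b := by
    refine horiz_of_smooth (γ' := fun _ => (x, y, 0)) hab ?_ continuous_const ?_
    · intro s
      have h1 : HasDerivAt (fun s : ℝ => s • x) x s := by
        simpa using (hasDerivAt_id s).smul_const x
      have h2 : HasDerivAt (fun s : ℝ => s • y) y s := by
        simpa using (hasDerivAt_id s).smul_const y
      exact h1.prodMk (h2.prodMk (hasDerivAt_const s t))
    · intro s
      simp only [Pi.smul_apply, smul_eq_mul]
      rw [Finset.sum_eq_zero]
      · simp
      · intro j _; ring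
  have hd : ∀ u v : ℝ, hproj ((u • x, u • y, t) : Hpt n) - hproj ((v • x, v • y, t) : Hpt n)
      = (u - v) • hproj ((x, y, t) : Hpt n) := by
    intro u v
    ext i; rcases i with i | i <;> simp [hproj] <;> ring
  refine geod_of hh ?_
  intro η c d hη hc hd'
  refine (hLength_le ‖hproj ((x, y, t) : Hpt n)‖ (norm_nonneg _) ?_).trans ?_
  · intro u _ v _
    rw [hd, norm_smul, mul_comm, Real.norm_eq_abs]
  · have := eVariationOn.edist_le (fun s => hproj (η s)) (s := Icc c d)
      (right_mem_Icc.2 hη.1) (left_mem_Icc.2 hη.1)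
    refine le_trans (le_of_eq ?_) this
    simp only [hc, hd']
    rw [edist_dist, dist_eq_norm, hd, norm_smul, Real.norm_of_nonneg (sub_nonneg.2 hab), mul_comm]

def circ {n : ℕ} (x0 y0 : Fin n → ℝ) (t0 : ℝ) (p q : Fin n → ℝ) (ρ : ℝ) (s : ℝ) : Hpt n :=
  (x0 + ((cos s - 1) • p + sin s • q), y0 + ((cos s - 1) • q - sin s • p),
    t0 + 2 * ρ * (s - sin s) + 2 * ∑ j, (((cos s - 1) * p j + sin s * q j) * y0 j
      - ((cos s - 1) * q j - sin s * p j) * x0 j))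

def circ' {n : ℕ} (x0 y0 : Fin n → ℝ) (p q : Fin n → ℝ) (ρ : ℝ) (s : ℝ) : Hpt n :=
  ((-sin s) • p + cos s • q, (-sin s) • q - cos s • p,
    2 * ρ * (1 - cos s) + 2 * ∑ j, (((-sin s) * p j + cos s * q j) * y0 j
      - ((-sin s) * q j - cos s * p j) * x0 j))

lemma circ_deriv {n : ℕ} (x0 y0 : Fin n → ℝ) (t0 : ℝ) (p q : Fin n → ℝ) (ρ : ℝ) (s : ℝ) :
    HasDerivAt (circ x0 y0 t0 p q ρ) (circ' x0 y0 p q ρ s) s := by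
  have hc : HasDerivAt (fun s => cos s - 1) (-sin s) s := (hasDerivAt_cos s).sub_const 1
  have hs : HasDerivAt (fun s => sin s) (cos s) s := hasDerivAt_sin s
  have h1 : HasDerivAt (fun s => x0 + ((cos s - 1) • p + sin s • q))
      ((-sin s) • p + cos s • q) s := ((hc.smul_const p).add (hs.smul_const q)).const_add x0
  have h2 : HasDerivAt (fun s => y0 + ((cos s - 1) • q - sin s • p))
      ((-sin s) • q - cos s • p) s := ((hc.smul_const q).sub (hs.smul_const p)).const_add y0
  have h3 : HasDerivAt (fun s => t0 + 2 * ρ * (s - sin s)) (2 * ρ * (1 - cos s)) s :=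
    (((hasDerivAt_id s).sub hs).const_mul (2 * ρ)).const_add t0
  have h4 : HasDerivAt (fun s => 2 * ∑ j, (((cos s - 1) * p j + sin s * q j) * y0 j
      - ((cos s - 1) * q j - sin s * p j) * x0 j))
      (2 * ∑ j, (((-sin s) * p j + cos s * q j) * y0 j
      - ((-sin s) * q j - cos s * p j) * x0 j)) s := by
    apply HasDerivAt.const_mul
    apply HasDerivAt.fun_sum
    intro j _
    exact (((hc.mul_const (p j)).add (hs.mul_const (q j))).mul_const (y0 j)).sub
      (((hc.mul_const (q j)).sub (hs.mul_const (p j))).mul_const (x0 j))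
  exact h1.prodMk (h2.prodMk (h3.add h4))

lemma circ_geod {n : ℕ} (x0 y0 : Fin n → ℝ) (t0 : ℝ) (p q : Fin n → ℝ) (ρ : ℝ)
    (hρ : ∑ j, (p j ^ 2 + q j ^ 2) = ρ) :
    IsGeodesicOn (circ x0 y0 t0 p q ρ) 0 (2 * π) := by
  have hρ0 : 0 ≤ ρ := by rw [← hρ]; positivity
  have hh : IsHorizontal (circ x0 y0 t0 p q ρ) 0 (2 * π) := by
    refine horiz_of_smooth (by positivity) (circ_deriv x0 y0 t0 p q ρ) ?_ ?_
    · unfold circ'; fun_prop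
    · intro s
      simp only [circ, circ', Pi.add_apply, Pi.sub_apply, Pi.smul_apply, smul_eq_mul]
      rw [← hρ, mul_assoc, ← mul_add, Finset.sum_mul, ← Finset.sum_add_distrib]
      congr 1
      apply Finset.sum_congr rfl
      intro j _
      linear_combination (-(p j ^ 2 + q j ^ 2)) * sin_sq_add_cos_sq s
  refine geod_of hh ?_
  intro η c d hη hc hd
  have e0 : circ x0 y0 t0 p q ρ 0 = (x0, y0, t0) := by simp [circ]
  have e1 : circ x0 y0 t0 p q ρ (2 * π) = (x0, y0, t0 + 4 * π * ρ) := by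
    simp [circ]; ring
  rw [e0] at hc
  rw [e1] at hd
  have hge := hlen_ge hη hc hd
  refine (hLength_le (√ρ) (Real.sqrt_nonneg _) ?_).trans ?_
  · intro u _ v _
    have hder : ∀ s ∈ (univ : Set ℝ), HasDerivWithinAt (fun s => hproj (circ x0 y0 t0 p q ρ s))
        (hproj (circ' x0 y0 p q ρ s)) univ s := fun s _ =>
      ((hprojL n).hasFDerivAt.comp_hasDerivAt s (circ_deriv x0 y0 t0 p q ρ s)).hasDerivWithinAt
    have := Convex.norm_image_sub_le_of_norm_hasDerivWithin_le (C := √ρ) hder ?_ convex_univ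
      (mem_univ v) (mem_univ u)
    · simpa using this
    · intro s _
      rw [EuclideanSpace.norm_eq]
      apply Real.sqrt_le_sqrt
      rw [Fintype.sum_sum_type, ← Finset.sum_add_distrib, ← hρ]
      apply le_of_eq
      apply Finset.sum_congr rfl
      intro j _
      simp [hproj, circ']
      linear_combination (p j ^ 2 + q j ^ 2) * sin_sq_add_cos_sq s
  · rw [← ENNReal.ofReal_toReal (hLength_ne_top hη)]
    apply ENNReal.ofReal_le_ofReal
    apply le_of_sq_le_sq _ ENNReal.toReal_nonneg
    refine le_trans (le_of_eq ?_) hge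
    rw [mul_pow, Real.sq_sqrt hρ0]; ring

lemma bub {n : ℕ} {S : Set (Hpt n)} (hS : geodJoin S ⊆ S) {x0 y0 : Fin n → ℝ} {t0 t1 ρ : ℝ}
    {p q : Fin n → ℝ} (hρ : ∑ j, (p j ^ 2 + q j ^ 2) = ρ) (ht : t1 = t0 + 4 * π * ρ)
    (h0 : (x0, y0, t0) ∈ S) (h1 : (x0, y0, t1) ∈ S) {s : ℝ} (hs : s ∈ Icc 0 (2 * π)) :
    circ x0 y0 t0 p q ρ s ∈ S := by
  apply hS
  refine ⟨_, h0, _, h1, _, 0, 2 * π, circ_geod x0 y0 t0 p q ρ hρ, ?_, ?_, s, hs, rfl⟩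
  · simp [circ]
  · simp [circ, ht]; ring

lemma seg {n : ℕ} {S : Set (Hpt n)} (hS : geodJoin S ⊆ S) {x y : Fin n → ℝ} {t : ℝ}
    (h0 : (x, y, t) ∈ S) (h1 : (-x, -y, t) ∈ S) {c : ℝ} (hc : c ∈ Icc (-1 : ℝ) 1) :
    (c • x, c • y, t) ∈ S := by
  apply hS
  refine ⟨_, h1, _, h0, _, -1, 1, seg_geod x y t (-1) 1 (by norm_num), ?_, ?_, c, hc, rfl⟩
  · simp
  · simp

/-- points of the bubble over the axis -/
lemma axis_bub {n : ℕ} {S : Set (Hpt n)} (hS : geodJoin S ⊆ S) {a b ρ : ℝ}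
    (hb : b = a + 4 * π * ρ) (h0 : ((0, 0, a) : Hpt n) ∈ S) (h1 : ((0, 0, b) : Hpt n) ∈ S)
    {p q : Fin n → ℝ} (hρ : ∑ j, (p j ^ 2 + q j ^ 2) = ρ) {s : ℝ} (hs : s ∈ Icc 0 (2 * π)) :
    (((cos s - 1) • p + sin s • q, (cos s - 1) • q - sin s • p, a + 2 * ρ * (s - sin s)) : Hpt n)
      ∈ S := by
  have := bub hS hρ hb h0 h1 hs
  simpa [circ] using this

lemma axis_fill {n : ℕ} {S : Set (Hpt n)} (hS : geodJoin S ⊆ S) {a b ρ : ℝ}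
    (hb : b = a + 4 * π * ρ) (h0 : ((0, 0, a) : Hpt n) ∈ S) (h1 : ((0, 0, b) : Hpt n) ∈ S)
    {p q : Fin n → ℝ} (hρ : ∑ j, (p j ^ 2 + q j ^ 2) = ρ) {s : ℝ} (hs : s ∈ Icc 0 (2 * π))
    {c : ℝ} (hc : c ∈ Icc (-1 : ℝ) 1) :
    ((c • ((cos s - 1) • p + sin s • q), c • ((cos s - 1) • q - sin s • p),
      a + 2 * ρ * (s - sin s)) : Hpt n) ∈ S := by
  refine seg hS (axis_bub hS hb h0 h1 hρ hs) ?_ hc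
  have := axis_bub hS hb h0 h1 (p := -p) (q := -q) (by simpa using hρ) hs
  convert this using 2
  · simp; abel
  · congr 1; simp; abel

lemma exists_vec {n : ℕ} (hn : 1 ≤ n) {ρ : ℝ} (hρ : 0 ≤ ρ) :
    ∃ p : Fin n → ℝ, ∑ j, p j ^ 2 = ρ := by
  refine ⟨fun j => if j = ⟨0, hn⟩ then √ρ else 0, ?_⟩
  simp [ite_pow, Real.sq_sqrt hρ]

lemma axis_ord {n : ℕ} (hn : 1 ≤ n) {S : Set (Hpt n)} (hS : geodJoin S ⊆ S) {a b c : ℝ}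
    (h0 : ((0, 0, a) : Hpt n) ∈ S) (h1 : ((0, 0, b) : Hpt n) ∈ S) (hc : c ∈ Icc a b) :
    ((0, 0, c) : Hpt n) ∈ S := by
  have hab : a ≤ b := hc.1.trans hc.2
  have hρ : 0 ≤ (b - a) / (4 * π) := div_nonneg (by linarith) (by positivity)
  set ρ := (b - a) / (4 * π) with hρd
  have hb : b = a + 4 * π * ρ := by rw [hρd]; field_simp; ring
  obtain ⟨p, hp⟩ := exists_vec hn hρ
  have hcont : ContinuousOn (fun s => a + 2 * ρ * (s - sin s)) (Icc 0 (2 * π)) := by fun_prop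
  have hiv := intermediate_value_Icc (by positivity : (0 : ℝ) ≤ 2 * π) hcont
  have hcm : c ∈ Icc ((fun s => a + 2 * ρ * (s - sin s)) 0)
      ((fun s => a + 2 * ρ * (s - sin s)) (2 * π)) := by
    simp only [sin_zero, sin_two_pi]
    constructor
    · have := hc.1; linarith
    · have := hc.2; linarith
  obtain ⟨s, hs, hsc⟩ := hiv hcm
  have := axis_fill hS hb h0 h1 (p := p) (q := 0) (by simpa using hp) hs (c := 0) (by simp)
  simp only [zero_smul] at this
  rw [← hsc]
  exact this

lemma cos_3pi : cos (3 * π / 2) = 0 := by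
  rw [show 3 * π / 2 = π / 2 + π by ring, cos_add_pi]; simp
lemma sin_3pi : sin (3 * π / 2) = -1 := by
  rw [show 3 * π / 2 = π / 2 + π by ring, sin_add_pi]; simp

/-- the filled bubble contains the whole vertical chord over each `z₀` with `|z₀|² = 2ρ` -/
lemma chord {n : ℕ} {S : Set (Hpt n)} (hS : geodJoin S ⊆ S) {a b ρ : ℝ}
    (hb : b = a + 4 * π * ρ) (h0 : ((0, 0, a) : Hpt n) ∈ S) (h1 : ((0, 0, b) : Hpt n) ∈ S)
    {x : Fin n → ℝ} (hx : ∑ j, x j ^ 2 = 2 * ρ) :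
    ((x, 0, a + ρ * (π - 2)) : Hpt n) ∈ S ∧ ((x, 0, a + ρ * (3 * π + 2)) : Hpt n) ∈ S := by
  have hsum : ∑ j, ((1 / 2 * x j) ^ 2 + (1 / 2 * x j) ^ 2) = ρ := by
    have : ∀ j, (1 / 2 * x j) ^ 2 + (1 / 2 * x j) ^ 2 = 1 / 2 * x j ^ 2 := fun j => by ring
    simp only [this]
    rw [← Finset.mul_sum, hx]; ring
  have hpi := pi_pos
  constructor
  · have := axis_bub hS hb h0 h1 (p := fun j => -(1 / 2 * x j)) (q := fun j => 1 / 2 * x j)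
      (by simpa using hsum) (s := π / 2) ⟨by positivity, by linarith⟩
    convert this using 2
    · ext j; simp; ring
    · congr 1
      · ext j; simp
      · simp; ring
  · have := axis_bub hS hb h0 h1 (p := fun j => -(1 / 2 * x j)) (q := fun j => -(1 / 2 * x j))
      (by simpa using hsum) (s := 3 * π / 2) ⟨by positivity, by linarith⟩
    rw [cos_3pi, sin_3pi] at this
    convert this using 2
    · ext j; simp; ring
    · congr 1
      · ext j; simp
      · ring

lemma tilt {n : ℕ} {S : Set (Hpt n)} (hS : geodJoin S ⊆ S) {a b ρ k : ℝ}
    (hk : k ^ 2 = 1 / 2 + 1 / π)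
    (hb : b = a + 4 * π * ρ) (h0 : ((0, 0, a) : Hpt n) ∈ S) (h1 : ((0, 0, b) : Hpt n) ∈ S)
    {x : Fin n → ℝ} (hx : ∑ j, x j ^ 2 = 2 * ρ) :
    ((x, -(k • x), b + ρ * (4 * k + 2 + 2 / π - 3 / 2 * π)) : Hpt n) ∈ S ∧
    ((x, k • x, a - ρ * (4 * k + 2 + 2 / π - 3 / 2 * π)) : Hpt n) ∈ S := by
  obtain ⟨hl, hu⟩ := chord hS hb h0 h1 hx
  have hsum : ∑ j, ((k / 2 * x j) ^ 2 + (k / 2 * x j) ^ 2) = ρ * (1 / 2 + 1 / π) := by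
    have : ∀ j, (k / 2 * x j) ^ 2 + (k / 2 * x j) ^ 2 = k ^ 2 / 2 * x j ^ 2 := fun j => by ring
    simp only [this]
    rw [← Finset.mul_sum, hx, hk]; ring
  have hgap : a + ρ * (3 * π + 2) = a + ρ * (π - 2) + 4 * π * (ρ * (1 / 2 + 1 / π)) := by
    field_simp; ring
  have hpi := pi_pos
  have hxx : ∑ j, k * x j * x j = k * (2 * ρ) := by
    rw [← hx, Finset.mul_sum]
    apply Finset.sum_congr rfl; intro j _; ring
  constructor
  · have := bub hS (p := fun j => -(k / 2 * x j)) (q := fun j => k / 2 * x j)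
      (by simpa using hsum) hgap hl hu (s := 3 * π / 2) ⟨by positivity, by linarith⟩
    unfold circ at this
    rw [cos_3pi, sin_3pi] at this
    convert this using 2
    · ext j; simp
    · congr 1
      · ext j; simp; ring
      · have e : ∀ j, ((0 - 1) * -(k / 2 * x j) + -1 * (k / 2 * x j)) * (0 : Fin n → ℝ) j -
          ((0 - 1) * (k / 2 * x j) - -1 * -(k / 2 * x j)) * x j = k * x j * x j := by
          intro j; simp; ring
        simp only [e]
        rw [hxx, hb]
        field_simp; ring
  · have := bub hS (p := fun j => -(k / 2 * x j)) (q := fun j => -(k / 2 * x j))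
      (by simpa using hsum) hgap hl hu (s := π / 2) ⟨by positivity, by linarith⟩
    unfold circ at this
    rw [cos_pi_div_two, sin_pi_div_two] at this
    convert this using 2
    · ext j; simp
    · congr 1
      · ext j; simp; ring
      · have e : ∀ j, ((0 - 1) * -(k / 2 * x j) + 1 * -(k / 2 * x j)) * (0 : Fin n → ℝ) j -
          ((0 - 1) * -(k / 2 * x j) - 1 * -(k / 2 * x j)) * x j = - (k * x j * x j) := by
          intro j; rw [Pi.zero_apply]; ring
        simp only [e, Finset.sum_neg_distrib]
        rw [hxx]
        field_simp; ring

lemma expand {n : ℕ} (hn : 1 ≤ n) {S : Set (Hpt n)} (hS : geodJoin S ⊆ S) :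
    ∃ σ : ℝ, 0 < σ ∧ ∀ a b, a ≤ b → ((0, 0, a) : Hpt n) ∈ S → ((0, 0, b) : Hpt n) ∈ S →
      ((0, 0, b + σ * (b - a)) : Hpt n) ∈ S ∧ ((0, 0, a - σ * (b - a)) : Hpt n) ∈ S := by
  have hpi := pi_pos
  set k := √(1 / 2 + 1 / π) with hkd
  have hk : k ^ 2 = 1 / 2 + 1 / π := Real.sq_sqrt (by positivity)
  have hp1 : (3 : ℝ) < π := pi_gt_three
  have hp2 : π < 3.15 := pi_lt_d2
  have hinv : 0.31 ≤ 1 / π := by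
    rw [le_div_iff₀ hpi]; linarith
  have hk8 : 0.8 ≤ k := by
    apply Real.le_sqrt_of_sq_le
    norm_num; norm_num at hinv; linarith
  have h2 : 2 / π = 2 * (1 / π) := by ring
  refine ⟨(4 * k + 2 + 2 / π - 3 / 2 * π) / (4 * π), ?_, ?_⟩
  · apply div_pos _ (by positivity)
    rw [h2]; norm_num at *; linarith
  · intro a b hab h0 h1
    have hρ : 0 ≤ (b - a) / (4 * π) := div_nonneg (by linarith) (by positivity)
    set ρ := (b - a) / (4 * π) with hρd
    have hb : b = a + 4 * π * ρ := by rw [hρd]; field_simp; ring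
    obtain ⟨x, hx⟩ := exists_vec hn (by positivity : 0 ≤ 2 * ρ)
    obtain ⟨u1, l1⟩ := tilt hS hk hb h0 h1 hx
    obtain ⟨u2, l2⟩ := tilt hS hk hb h0 h1 (x := -x) (by simpa using hx)
    rw [smul_neg] at u2 l2
    have hu := seg hS u1 u2 (c := 0) (by simp)
    have hl := seg hS l1 l2 (c := 0) (by simp)
    have e : (4 * k + 2 + 2 / π - 3 / 2 * π) / (4 * π) * (b - a) =
        ρ * (4 * k + 2 + 2 / π - 3 / 2 * π) := by rw [hρd]; ring
    rw [e]
    simp only [zero_smul] at hu hl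
    exact ⟨hu, hl⟩

lemma axis_all {n : ℕ} (hn : 1 ≤ n) {S : Set (Hpt n)} (hS : geodJoin S ⊆ S) {T : ℝ} (hT : 0 < T)
    (h0 : ((0, 0, 0) : Hpt n) ∈ S) (h1 : ((0, 0, T) : Hpt n) ∈ S) (t : ℝ) :
    ((0, 0, t) : Hpt n) ∈ S := by
  obtain ⟨σ, hσ, hex⟩ := expand hn hS
  have up : ∀ m : ℕ, ((0, 0, T * (1 + σ) ^ m) : Hpt n) ∈ S := by
    intro m
    induction m with
    | zero => simpa using h1
    | succ m ih =>
      have := (hex 0 _ (by positivity) h0 ih).1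
      convert this using 3
      ring
  have down : ∀ m : ℕ, ((0, 0, T - T * (1 + σ) ^ m) : Hpt n) ∈ S := by
    intro m
    induction m with
    | zero => simpa using h0
    | succ m ih =>
      have := (hex _ T (by linarith [show 0 ≤ T * (1 + σ) ^ m by positivity]) ih h1).2
      convert this using 3
      ring
  obtain ⟨m, hm⟩ := pow_unbounded_of_one_lt ((|t| + T) / T) (by linarith : 1 < 1 + σ)
  rw [div_lt_iff₀ hT] at hm
  refine axis_ord hn hS (down m) (up m) ⟨?_, ?_⟩
  · linarith [neg_abs_le t]
  · linarith [le_abs_self t]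

lemma closed_univ {n : ℕ} (hn : 1 ≤ n) {S : Set (Hpt n)} (hS : geodJoin S ⊆ S) {T : ℝ} (hT : 0 < T)
    (h0 : ((0, 0, 0) : Hpt n) ∈ S) (h1 : ((0, 0, T) : Hpt n) ∈ S) : S = univ := by
  rw [eq_univ_iff_forall]
  rintro ⟨x, y, t⟩
  have hax := axis_all hn hS hT h0 h1
  have hpi := pi_pos
  have := axis_bub hS (a := t - 2 * π * (∑ j, ((-(1 / 2 * x j)) ^ 2 + (-(1 / 2 * y j)) ^ 2)))
    rfl (hax _) (hax _) (p := fun j => -(1 / 2 * x j)) (q := fun j => -(1 / 2 * y j)) rfl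
    (s := π) ⟨by positivity, by linarith⟩
  convert this using 2
  · ext j; simp; ring
  · congr 1
    · ext j; simp; ring
    · rw [sin_pi]; ring

lemma subset_geodJoin {n : ℕ} (S : Set (Hpt n)) : S ⊆ geodJoin S := by
  intro p hp
  refine ⟨p, hp, p, hp, fun _ => p, 0, 0, ?_, rfl, rfl, 0, by simp, rfl⟩
  have hh : IsHorizontal (fun _ : ℝ => p) 0 0 := by
    refine horiz_of_smooth (γ' := fun _ => 0) le_rfl (fun s => hasDerivAt_const s p)
      continuous_const ?_
    intro s; simp
  refine geod_of hh ?_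
  intro η c d _ _ _
  have : hLength (fun _ : ℝ => p) 0 0 = 0 := by
    simp [hLength, eVariationOn.subsingleton]
  rw [this]; exact bot_le

lemma Gm_closed {n : ℕ} (A : Set (Hpt n)) :
    geodJoin (⋃ m : ℕ, Gm A (m + 1)) ⊆ ⋃ m : ℕ, Gm A (m + 1) := by
  have hmono : Monotone (Gm A) := monotone_nat_of_le_succ fun m => subset_geodJoin (Gm A m)
  rintro z ⟨p, hp, q, hq, γ, a, b, h⟩
  obtain ⟨i, hi⟩ := mem_iUnion.1 hp
  obtain ⟨j, hj⟩ := mem_iUnion.1 hq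
  refine mem_iUnion.2 ⟨max i j + 1, p, ?_, q, ?_, γ, a, b, h⟩
  · exact hmono (by simp) hi
  · exact hmono (by simp) hj

/-- For `A = {(0,0,0), (0,0,T₀)}` with `T₀ > 0`, the union of the iterated
geodesic hulls `G^m(A)`, `m ≥ 1`, is the whole space `ℍⁿ`. -/
theorem stmt_5 (n : ℕ) (hn : 1 ≤ n) (T₀ : ℝ) (hT : 0 < T₀) :
    (⋃ m : ℕ, Gm ({((0 : Fin n → ℝ), (0 : Fin n → ℝ), (0 : ℝ)),
      ((0 : Fin n → ℝ), (0 : Fin n → ℝ), T₀)} : Set (Hpt n)) (m + 1)) = Set.univ := by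
  refine closed_univ hn (Gm_closed _) hT ?_ ?_
  · exact mem_iUnion.2 ⟨0, subset_geodJoin _ (by simp [Gm])⟩
  · exact mem_iUnion.2 ⟨0, subset_geodJoin _ (by simp [Gm])⟩
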